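/- The elliptic curve Y² = X³ − 21151030877616·X + 31685265497576201600 over ℚ has a rational point of infinite order. -/

import Mathlib

open WeierstrassCurve

/-- The curve `Y² = X³ - 21151030877616 X + 31685265497576201600` over `ℚ`. -/
abbrev curve : WeierstrassCurve ℚ :=
  WeierstrassCurve.mk 0 0 0 (-21151030877616) 31685265497576201600

/-- The quadratic factor of the cubic defining `curve`, in the coordinate `u = x - 3465100`
centred at the rational `2`-torsion point. -/
def quadFactor (u : ℚ) : ℚ :=
  u ^ 2 + 10395300 * u + 14869723152384

lemma equation_curve_iff (x y : ℚ) :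
    curve.toAffine.Equation x y ↔ y ^ 2 = (x - 3465100) * quadFactor (x - 3465100) := by
  rw [Affine.equation_iff, quadFactor]
  constructor <;> intro h <;> linear_combination h

lemma two_nsmul_some {x y : ℚ} (h : curve.toAffine.Nonsingular x y) (hy : y ≠ 0) :
    ∃ (x' y' : ℚ) (h' : curve.toAffine.Nonsingular x' y'),
      2 • Affine.Point.some x y h = .some x' y' h' ∧
      (x' - 3465100) * (4 * ((x - 3465100) * quadFactor (x - 3465100))) =
        ((x - 3465100) ^ 2 - 14869723152384) ^ 2 := by
  have hneg : y ≠ curve.toAffine.negY x y := by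
    simp only [Affine.negY]
    contrapose! hy
    linear_combination hy / 2
  refine ⟨_, _, _, (two_nsmul _).trans (Affine.Point.add_self_of_Y_ne hneg), ?_⟩
  have heq := (equation_curve_iff x y).1 h.1
  rw [Affine.slope_of_Y_ne rfl hneg, ← heq]
  simp only [Affine.addX, Affine.negY]
  have hden : y - (-y - 0 * x - 0) = 2 * y := by ring
  rw [hden]
  field_simp
  rw [quadFactor] at heq
  linear_combination (-32 * x - 55441600) * heq

lemma padicNorm_add_two_mul {c z : ℚ} (hc : padicNorm 2 c = 1) (hz : padicNorm 2 z ≤ 1) :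
    padicNorm 2 (c + 2 * z) = 1 := by
  have h2 : padicNorm 2 (2 * z) < 1 := by
    have : padicNorm 2 (2 : ℚ) = 2⁻¹ := by exact_mod_cast padicNorm.padicNorm_p one_lt_two
    rw [padicNorm.mul, this]
    linarith
  rw [padicNorm.add_eq_max_of_ne (by rw [hc]; exact h2.ne'), hc, max_eq_left h2.le]

lemma padicNorm_add_of_le_of_one_lt {u z : ℚ} (hu : 1 < padicNorm 2 u)
    (hz : padicNorm 2 z ≤ padicNorm 2 u) :
    padicNorm 2 (u ^ 2 + z) = padicNorm 2 u ^ 2 := by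
  have hlt : padicNorm 2 z < padicNorm 2 (u ^ 2) := by
    rw [pow_two, padicNorm.mul]
    nlinarith
  rw [padicNorm.add_eq_max_of_ne hlt.ne', max_eq_left hlt.le, pow_two, padicNorm.mul, pow_two]

lemma padicNorm_quadFactor {u : ℚ} (hu : 1 < padicNorm 2 u) :
    padicNorm 2 (quadFactor u) = padicNorm 2 u ^ 2 := by
  rw [quadFactor, add_assoc]
  refine padicNorm_add_of_le_of_one_lt hu (padicNorm.nonarchimedean.trans (max_le ?_ ?_))
  · rw [padicNorm.mul]
    exact mul_le_of_le_one_left (padicNorm.nonneg u) (padicNorm.of_nat 10395300)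
  · exact (padicNorm.of_nat 14869723152384).trans hu.le

lemma padicNorm_four : padicNorm 2 (4 : ℚ) = 1 / 4 := by
  have h2 : padicNorm 2 (2 : ℚ) = 2⁻¹ := by exact_mod_cast padicNorm.padicNorm_p one_lt_two
  rw [show (4 : ℚ) = 2 * 2 by norm_num, padicNorm.mul, h2]
  norm_num

/-- Close to the origin in the `2`-adic topology, doubling a point multiplies the `2`-adic norm of
its `x`-coordinate by `4`. -/
lemma padicNorm_of_doubling {u u' : ℚ} (hu : 1 < padicNorm 2 u)
    (h : u' * (4 * (u * quadFactor u)) = (u ^ 2 - 14869723152384) ^ 2) :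
    padicNorm 2 u' = 4 * padicNorm 2 u := by
  have hnum : padicNorm 2 (u ^ 2 - 14869723152384) = padicNorm 2 u ^ 2 := by
    rw [sub_eq_add_neg]
    refine padicNorm_add_of_le_of_one_lt hu ?_
    rw [padicNorm.neg]
    exact (padicNorm.of_nat 14869723152384).trans hu.le
  have h' := congrArg (padicNorm 2) h
  simp only [pow_two (_ - _), padicNorm.mul, padicNorm_quadFactor hu, hnum, padicNorm_four] at h'
  have h3 : padicNorm 2 u ^ 3 ≠ 0 := by positivity
  apply mul_right_cancel₀ h3
  linear_combination 4 * h'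

lemma exists_two_nsmul_of_one_lt_padicNorm {x y : ℚ} (h : curve.toAffine.Nonsingular x y)
    (hx : 1 < padicNorm 2 (x - 3465100)) :
    ∃ (x' y' : ℚ) (h' : curve.toAffine.Nonsingular x' y'),
      2 • Affine.Point.some x y h = .some x' y' h' ∧
      padicNorm 2 (x' - 3465100) = 4 * padicNorm 2 (x - 3465100) := by
  have hy : y ≠ 0 := by
    rintro rfl
    have h0 := congrArg (padicNorm 2) ((equation_curve_iff x 0).1 h.1)
    rw [padicNorm.mul, padicNorm_quadFactor hx] at h0
    have : 0 < padicNorm 2 (x - 3465100) * padicNorm 2 (x - 3465100) ^ 2 := by positivity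
    simp [← h0] at this
  obtain ⟨x', y', h', h2, hd⟩ := two_nsmul_some h hy
  exact ⟨x', y', h', h2, padicNorm_of_doubling hx hd⟩

lemma exists_two_pow_nsmul {x y : ℚ} (h : curve.toAffine.Nonsingular x y)
    (hx : 1 < padicNorm 2 (x - 3465100)) (k : ℕ) :
    ∃ (x' y' : ℚ) (h' : curve.toAffine.Nonsingular x' y'),
      2 ^ k • Affine.Point.some x y h = .some x' y' h' ∧
      padicNorm 2 (x' - 3465100) = 4 ^ k * padicNorm 2 (x - 3465100) := by
  induction k with
  | zero => exact ⟨x, y, h, by simp, by simp⟩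
  | succ k ih =>
    obtain ⟨x₁, y₁, h₁, hP, hn⟩ := ih
    have hx₁ : 1 < padicNorm 2 (x₁ - 3465100) := by
      rw [hn]
      exact one_lt_mul_of_le_of_lt (one_le_pow₀ (by norm_num)) hx
    obtain ⟨x₂, y₂, h₂, hQ, hm⟩ := exists_two_nsmul_of_one_lt_padicNorm h₁ hx₁
    refine ⟨x₂, y₂, h₂, ?_, ?_⟩
    · rw [pow_succ, mul_nsmul, hP, hQ]
    · rw [hm, hn]
      ring

/-- A point close to the origin in the `2`-adic topology has infinite order. -/
lemma not_isOfFinAddOrder_of_one_lt_padicNorm {x y : ℚ} (h : curve.toAffine.Nonsingular x y)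
    (hx : 1 < padicNorm 2 (x - 3465100)) :
    ¬ IsOfFinAddOrder (Affine.Point.some x y h) := by
  rw [← infinite_multiples]
  refine Set.infinite_of_injective_forall_mem (f := fun k : ℕ ↦ 2 ^ k • Affine.Point.some x y h)
    (fun k l hkl ↦ ?_) fun k ↦ ⟨2 ^ k, rfl⟩
  obtain ⟨x₁, y₁, h₁, hP, hn⟩ := exists_two_pow_nsmul h hx k
  obtain ⟨x₂, y₂, h₂, hQ, hm⟩ := exists_two_pow_nsmul h hx l
  obtain rfl : x₁ = x₂ := by
    simp only [hP, hQ, Affine.Point.some.injEq] at hkl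
    exact hkl.1
  refine pow_right_injective₀ (a := (4 : ℚ)) (by norm_num) (by norm_num) ?_
  exact mul_right_cancel₀ (by positivity) (hn.symm.trans hm)

/-- A point `2`-adically close to the `2`-torsion point `(3465100, 0)` doubles to a point close to
the origin. -/
lemma one_lt_padicNorm_of_doubling {s u' : ℚ} (hs : padicNorm 2 s = 1)
    (h : u' * (4 * (2 ^ 24 * s ^ 2 * quadFactor (2 ^ 24 * s ^ 2))) =
      ((2 ^ 24 * s ^ 2) ^ 2 - 14869723152384) ^ 2) :
    1 < padicNorm 2 u' := by
  have hc : padicNorm 2 (226893969 : ℚ) = 1 :=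
    (padicNorm.nat_eq_one_iff 226893969).2 (by norm_num)
  have hs2 : padicNorm 2 (s ^ 2) = 1 := by rw [pow_two, padicNorm.mul, hs, one_mul]
  have hs4 (n : ℕ) : padicNorm 2 (n * s ^ 2 * s ^ 2) ≤ 1 := by
    simpa only [padicNorm.mul, hs2, mul_one] using padicNorm.of_nat n
  have hquad : padicNorm 2 (226893969 + 2 * ((2 ^ 31 : ℕ) * s ^ 2 * s ^ 2 +
      (1330598400 : ℕ) * s ^ 2)) = 1 := by
    refine padicNorm_add_two_mul hc (padicNorm.nonarchimedean.trans (max_le (hs4 _) ?_))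
    simpa only [padicNorm.mul, hs2, mul_one] using padicNorm.of_nat 1330598400
  have hnum : padicNorm 2 (-226893969 + 2 * ((2 ^ 31 : ℕ) * s ^ 2 * s ^ 2)) = 1 :=
    padicNorm_add_two_mul (by rw [padicNorm.neg, hc]) (hs4 _)
  have h' : 4 * (u' * 256 * s ^ 2 *
      (226893969 + 2 * ((2 ^ 31 : ℕ) * s ^ 2 * s ^ 2 + (1330598400 : ℕ) * s ^ 2))) =
      (-226893969 + 2 * ((2 ^ 31 : ℕ) * s ^ 2 * s ^ 2)) ^ 2 := by
    rw [quadFactor] at h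
    push_cast
    linear_combination h / 2 ^ 32
  have hnorm := congrArg (padicNorm 2) h'
  have h256 : padicNorm 2 (256 : ℚ) ≤ 1 := padicNorm.of_nat 256
  simp only [pow_two (_ + _), padicNorm.mul, hquad, hnum, hs2, padicNorm_four, mul_one] at hnorm
  by_contra! hu'
  have := mul_le_one₀ hu' (padicNorm.nonneg 256) h256
  linarith

lemma witness_nonsingular :
    curve.toAffine.Nonsingular (6008706700 / 1681) (91230882238080 / 68921) := by
  rw [Affine.nonsingular_iff, Affine.equation_iff]
  norm_num

lemma witness_eight_nsmul :
    ∃ (x y : ℚ) (h : curve.toAffine.Nonsingular x y),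
      8 • Affine.Point.some _ _ witness_nonsingular = .some x y h ∧
      1 < padicNorm 2 (x - 3465100) := by
  obtain ⟨x₁, y₁, h₁, hP₁, hd₁⟩ := two_nsmul_some witness_nonsingular (by norm_num)
  have hx₁ : x₁ - 3465100 = 2 ^ 8 * (87607827240307 / 249764033905) ^ 2 := by
    norm_num [quadFactor] at hd₁ ⊢
    linarith
  have hy₁ : y₁ ≠ 0 := by
    rintro rfl
    have h0 := (equation_curve_iff x₁ 0).1 h₁.1
    rw [hx₁] at h0
    norm_num [quadFactor] at h0
  obtain ⟨x₂, y₂, h₂, hP₂, hd₂⟩ := two_nsmul_some h₁ hy₁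
  have hx₂ : x₂ - 3465100 = 2 ^ 24 *
      (906635606497868100853391166508766713562664716483052709 /
        1558170499658321992036164598140878146839911377859141195) ^ 2 := by
    rw [hx₁] at hd₂
    norm_num [quadFactor] at hd₂ ⊢
    linarith
  have hy₂ : y₂ ≠ 0 := by
    rintro rfl
    have h0 := (equation_curve_iff x₂ 0).1 h₂.1
    rw [hx₂] at h0
    norm_num [quadFactor] at h0
  obtain ⟨x₃, y₃, h₃, hP₃, hd₃⟩ := two_nsmul_some h₂ hy₂
  refine ⟨x₃, y₃, h₃, ?_, ?_⟩
  · rw [show 8 = 2 * 2 * 2 by norm_num, mul_nsmul, mul_nsmul, hP₁, hP₂, hP₃]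
  · rw [hx₂] at hd₃
    refine one_lt_padicNorm_of_doubling ?_ hd₃
    have hn := (padicNorm.nat_eq_one_iff (p := 2)
      906635606497868100853391166508766713562664716483052709).2 (by norm_num)
    have hd := (padicNorm.nat_eq_one_iff (p := 2)
      1558170499658321992036164598140878146839911377859141195).2 (by norm_num)
    simp only [Nat.cast_ofNat] at hn hd
    rw [padicNorm.div, hn, hd, div_one]

theorem stmt16 :
    ∃ P : (WeierstrassCurve.mk 0 0 0 (-21151030877616) 31685265497576201600 : WeierstrassCurve ℚ).toAffine.Point,
      ∀ n : ℕ, 0 < n → n • P ≠ 0 := by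
  obtain ⟨x, y, h, h8, hx⟩ := witness_eight_nsmul
  refine ⟨.some _ _ witness_nonsingular, fun n hn h0 ↦
    not_isOfFinAddOrder_of_one_lt_padicNorm h hx ?_⟩
  refine isOfFinAddOrder_iff_nsmul_eq_zero.2 ⟨n, hn, ?_⟩
  rw [← h8, nsmul_left_comm, h0, nsmul_zero]
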